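/- Let p be a prime, q = 1/p, and let k ≥ 0 and μ ≥ 1 be integers. Set s = ⌊(μ−1)/2⌋. Then P(2k, p^μ) = P(2k+1, p^μ) + q^{2k+μ} · (Π_{2k}(q) / Π_k(q²)) · T_1(k,s). -/

import Mathlib

/-- Number of symmetric `n × n` matrices over `ZMod m` with nonzero determinant. -/
noncomputable def Nsym (n m : ℕ) : ℕ :=
  Nat.card {A : Matrix (Fin n) (Fin n) (ZMod m) // A.IsSymm ∧ A.det ≠ 0}

/-- Proportion of symmetric `n × n` matrices over `ZMod m` with nonzero determinant. -/
noncomputable def Psym (n m : ℕ) : ℝ :=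
  (Nsym n m : ℝ) / (m : ℝ) ^ (n * (n + 1) / 2)

/-- `Π_n(t) = ∏_{j=1}^n (1 - t^j)`. -/
noncomputable def PiProd (n : ℕ) (t : ℝ) : ℝ :=
  ∏ j ∈ Finset.range n, (1 - t ^ (j + 1))

/-- `T_β(k,s)`: equal to `1` if `k = 0`, and to
`∑_{j=0}^{s} q^{βj} · Π_{k+j−1}(q²) / (Π_j(q²) · Π_{k−1}(q²))` if `k ≥ 1`. -/
noncomputable def T (q : ℝ) (β k s : ℕ) : ℝ :=
  if k = 0 then 1
  else ∑ j ∈ Finset.range (s + 1),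
    q ^ (β * j) * PiProd (k + j - 1) (q ^ 2) / (PiProd j (q ^ 2) * PiProd (k - 1) (q ^ 2))

open Finset IsLocalRing

section Counting

variable {R : Type*} [CommRing R] [Fintype R] [IsLocalRing R]

/-- The symmetric matrices with nonzero determinant whose rows (and columns) marked by `s` have
all their entries in the maximal ideal. -/
noncomputable def symFinset (R : Type*) [CommRing R] [Fintype R] [IsLocalRing R]
    {σ : Type*} [Fintype σ] [DecidableEq σ] (s : σ → Prop) : Finset (Matrix σ σ R) := by
  classical exact univ.filter fun A =>
    A.IsSymm ∧ (∀ a, s a → ∀ b, A a b ∈ maximalIdeal R) ∧ A.det ≠ 0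

theorem mem_symFinset {σ : Type*} [Fintype σ] [DecidableEq σ] {s : σ → Prop}
    {A : Matrix σ σ R} : A ∈ symFinset R s ↔
      A.IsSymm ∧ (∀ a, s a → ∀ b, A a b ∈ maximalIdeal R) ∧ A.det ≠ 0 := by
  classical simp [symFinset]

theorem card_symFinset_congr {σ σ' : Type*} [Fintype σ] [DecidableEq σ] [Fintype σ']
    [DecidableEq σ'] (e : σ' ≃ σ) (s : σ → Prop) (s' : σ' → Prop) (h : ∀ x, s' x ↔ s (e x)) :
    (symFinset R s').card = (symFinset R s).card := by
  refine Finset.card_nbij' (fun A => A.submatrix e.symm e.symm) (fun A => A.submatrix e e)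
    ?_ ?_ ?_ ?_
  · intro A hA
    simp only [SetLike.mem_coe, mem_symFinset] at hA ⊢
    refine ⟨hA.1.submatrix _, fun a ha b => ?_, ?_⟩
    · exact hA.2.1 _ ((h _).2 (by simpa using ha)) _
    · rw [Matrix.det_submatrix_equiv_self]; exact hA.2.2
  · intro A hA
    simp only [SetLike.mem_coe, mem_symFinset] at hA ⊢
    refine ⟨hA.1.submatrix _, fun a ha b => ?_, ?_⟩
    · exact hA.2.1 _ ((h _).1 ha) _
    · rw [Matrix.det_submatrix_equiv_self]; exact hA.2.2
  · intro A _; ext; simp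
  · intro A _; ext; simp

/-- Schur complements: prescribing pivot rows whose square block is invertible leaves as many
matrices as there are on the complementary index set. -/
theorem card_filter_rows_eq {σ σ' τ : Type*} [Fintype σ] [DecidableEq σ] [Fintype σ']
    [DecidableEq σ'] [Fintype τ] [DecidableEq τ] [DecidableEq R] (e : σ' ⊕ τ ≃ σ) (s : σ → Prop)
    (r : τ → σ → R) (hM : ∀ a b, r a (e (Sum.inr b)) = r b (e (Sum.inr a)))
    (hdet : IsUnit (Matrix.of fun a b => r a (e (Sum.inr b))).det)
    (hs : ∀ x, s (e (Sum.inl x)) → ∀ a, r a (e (Sum.inl x)) ∈ maximalIdeal R)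
    (hsr : ∀ a, ¬ s (e (Sum.inr a))) :
    ((symFinset R s).filter fun A => ∀ a, A (e (Sum.inr a)) = r a).card =
      (symFinset R fun x => s (e (Sum.inl x))).card := by
  set M : Matrix τ τ R := Matrix.of fun a b => r a (e (Sum.inr b)) with hMdef
  set C : Matrix σ' τ R := Matrix.of fun x a => r a (e (Sum.inl x)) with hC
  set K : Matrix σ' σ' R := C * M⁻¹ * C.transpose with hK
  have hMs : M.transpose = M := by ext a b; simp [hMdef, hM a b]
  have hKs : K.transpose = K := by
    simp [hK, Matrix.transpose_mul, Matrix.transpose_nonsing_inv, hMs, Matrix.mul_assoc]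
  have hKm : ∀ x, s (e (Sum.inl x)) → ∀ y, K x y ∈ maximalIdeal R := by
    intro x hx y
    rw [hK, Matrix.mul_assoc, Matrix.mul_apply]
    exact Ideal.sum_mem _ fun a _ => Ideal.mul_mem_right _ _ (hs x hx a)
  let : Invertible M := M.invertibleOfIsUnitDet hdet
  have hblock : ∀ B : Matrix σ' σ' R, (Matrix.fromBlocks B C C.transpose M).det ≠ 0 ↔
      (B - K).det ≠ 0 := by
    intro B
    rw [Matrix.det_fromBlocks₂₂, Matrix.invOf_eq_nonsing_inv, ← hK, Ne, Ne,
      hdet.mul_right_eq_zero]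
  refine Finset.card_nbij'
    (fun A => A.submatrix (fun x => e (Sum.inl x)) (fun x => e (Sum.inl x)) - K)
    (fun B => (Matrix.fromBlocks (B + K) C C.transpose M).submatrix e.symm e.symm) ?_ ?_ ?_ ?_
  · intro A hA
    simp only [SetLike.mem_coe, mem_filter, mem_symFinset] at hA ⊢
    obtain ⟨⟨h1, h2, h3⟩, h4⟩ := hA
    refine ⟨(h1.submatrix _).sub hKs, fun a ha b => ?_, ?_⟩
    · exact Ideal.sub_mem _ (h2 _ ha _) (hKm a ha b)
    · rw [← hblock]
      convert h3
      rw [← Matrix.det_submatrix_equiv_self e A]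
      congr 1
      ext x y
      have h1' := fun i j => h1.apply i j
      rcases x with x | x <;> rcases y with y | y <;> simp [hC, hMdef, ← h4]
      exact h1' _ _
  · intro B hB
    simp only [SetLike.mem_coe, mem_filter, mem_symFinset] at hB ⊢
    obtain ⟨h1, h2, h3⟩ := hB
    refine ⟨⟨?_, ?_, ?_⟩, ?_⟩
    · apply Matrix.IsSymm.submatrix
      exact Matrix.IsSymm.fromBlocks (h1.add hKs) rfl hMs
    · intro a ha b
      obtain ⟨a, rfl⟩ := e.surjective a
      obtain ⟨b, rfl⟩ := e.surjective b
      rcases a with a | a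
      · rcases b with b | b
        · simpa using Ideal.add_mem _ (h2 a ha b) (hKm a ha b)
        · simpa [hC] using hs a ha b
      · exact absurd ha (hsr a)
    · rw [Matrix.det_submatrix_equiv_self, hblock, add_sub_cancel_right]
      exact h3
    · intro a
      ext b
      obtain ⟨b, rfl⟩ := e.surjective b
      rcases b with b | b <;> simp [hC, hMdef]
  · intro A hA
    simp only [SetLike.mem_coe, mem_filter, mem_symFinset] at hA
    obtain ⟨⟨h1, h2, h3⟩, h4⟩ := hA
    ext x y
    obtain ⟨x, rfl⟩ := e.surjective x
    obtain ⟨y, rfl⟩ := e.surjective y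
    rcases x with x | x <;> rcases y with y | y <;> simp [hC, hMdef, ← h4]
    exact h1.apply _ _
  · intro B _
    ext x y
    simp

theorem prod_row_choices {σ : Type*} [Fintype σ] [DecidableEq σ] (s : σ → Prop) [DecidablePred s]
    {o : σ} (ho : ¬ s o) (a b c : ℕ) :
    ∏ x, (if x = o then a else if s x then b else c) =
      a * b ^ (univ.filter s).card * c ^ ((univ.filter fun x => ¬ s x).card - 1) := by
  rw [← mul_prod_erase univ _ (mem_univ o), if_pos rfl, mul_assoc]
  congr 1
  have h : ∀ x ∈ univ.erase o, (if x = o then a else if s x then b else c) =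
      if s x then b else c := fun x hx => if_neg (ne_of_mem_erase hx)
  rw [prod_congr rfl h, prod_ite, prod_const, prod_const, filter_erase, filter_erase,
    erase_eq_of_notMem (by simpa using ho), card_erase_of_mem (by simpa using ho)]

/-- The number of nonunits of a finite local ring. -/
noncomputable def nonunitCard (R : Type*) [CommRing R] [IsLocalRing R] : ℕ :=
  Nat.card (maximalIdeal R)

open Classical in
theorem card_filter_mem_maximalIdeal :
    (univ.filter fun x : R => x ∈ maximalIdeal R).card = nonunitCard R := by
  rw [nonunitCard, Nat.card_eq_fintype_card, ← Fintype.card_subtype]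

open Classical in
theorem card_filter_isUnit :
    (univ.filter fun x : R => IsUnit x).card = Fintype.card R - nonunitCard R := by
  rw [← card_filter_mem_maximalIdeal, ← card_compl]
  congr 1
  ext x
  simp

open Classical in
theorem card_filter_isUnit_diag {σ : Type*} [Fintype σ] [DecidableEq σ] (s : σ → Prop) {o : σ}
    (ho : ¬ s o) :
    ((symFinset R s).filter fun A => IsUnit (A o o)).card =
      (Fintype.card R - nonunitCard R) * nonunitCard R ^ (univ.filter s).card *
        Fintype.card R ^ ((univ.filter fun x => ¬ s x).card - 1) *
        (symFinset R fun x : {x // x ≠ o} => s x).card := by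
  let row (x : σ) : Finset R := if x = o then univ.filter fun x : R => IsUnit x
    else if s x then univ.filter fun x : R => x ∈ maximalIdeal R else univ
  have hrow : ∀ r ∈ Fintype.piFinset row, IsUnit (r o) ∧ ∀ x, s x → r x ∈ maximalIdeal R := by
    intro r hr
    rw [Fintype.mem_piFinset] at hr
    refine ⟨by simpa [row] using hr o, fun x hx => ?_⟩
    have hxo : x ≠ o := by rintro rfl; exact ho hx
    simpa [row, hxo, hx] using hr x
  have hmap : ∀ A ∈ (symFinset R s).filter fun A => IsUnit (A o o),
      A o ∈ Fintype.piFinset row := by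
    intro A hA
    rw [mem_filter, mem_symFinset] at hA
    rw [Fintype.mem_piFinset]
    intro x
    by_cases hx : x = o
    · subst hx; simpa [row] using hA.2
    · by_cases hsx : s x
      · have := hA.1.2.1 x hsx o
        rw [hA.1.1.apply] at this
        simpa [row, hx, hsx] using this
      · simp [row, hx, hsx]
  rw [card_eq_sum_card_fiberwise hmap,
    sum_const_nat (m := (symFinset R fun x : {x // x ≠ o} => s x).card),
    Fintype.card_piFinset]
  · congr 1
    rw [← prod_row_choices s ho]
    refine prod_congr rfl fun x _ => ?_
    simp only [row]
    split_ifs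
    · exact card_filter_isUnit
    · exact card_filter_mem_maximalIdeal
    · exact card_univ
  · intro r hr
    obtain ⟨h1, h2⟩ := hrow r hr
    let e : {x // x ≠ o} ⊕ Unit ≃ σ := Equiv.ofBijective (Sum.elim Subtype.val fun _ => o) (by
      constructor
      · rintro (⟨x, hx⟩ | x) (⟨y, hy⟩ | y) h <;> simp_all
        exact hy h.symm
      · intro x
        by_cases hx : x = o
        · exact ⟨Sum.inr (), hx.symm⟩
        · exact ⟨Sum.inl ⟨x, hx⟩, rfl⟩)
    refine Eq.trans ?_ (card_filter_rows_eq (R := R) e s (fun _ => r) (fun _ _ => rfl)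
      (by rw [Matrix.det_unique]; exact h1) (fun x hx _ => h2 _ hx) (fun _ => ho))
    congr 1
    ext A
    simp only [mem_filter]
    constructor
    · rintro ⟨⟨h3, h4⟩, h5⟩; exact ⟨h3, fun _ => h5⟩
    · rintro ⟨h3, h4⟩
      have h5 : A o = r := h4 ()
      exact ⟨⟨h3, by rw [h5]; exact h1⟩, h5⟩

open Classical in
theorem card_filter_pivot_pair {σ : Type*} [Fintype σ] [DecidableEq σ] (s : σ → Prop) {o c : σ}
    (hoc : o ≠ c) (ho : ¬ s o) (hc : ¬ s c) (r : σ → R) (hro : r o ∈ maximalIdeal R)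
    (hrc : IsUnit (r c)) (hrs : ∀ x, s x → r x ∈ maximalIdeal R) :
    ((symFinset R s).filter fun A => A o = r).card =
      nonunitCard R ^ (univ.filter s).card *
        Fintype.card R ^ ((univ.filter fun x => ¬ s x).card - 1) *
        (symFinset R fun x : {x // x ≠ o ∧ x ≠ c} => s x).card := by
  let row (x : σ) : Finset R := if x = o then {r c}
    else if s x then univ.filter fun x : R => x ∈ maximalIdeal R else univ
  have hrow : ∀ r' ∈ Fintype.piFinset row, r' o = r c ∧ ∀ x, s x → r' x ∈ maximalIdeal R := by
    intro r' hr
    rw [Fintype.mem_piFinset] at hr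
    refine ⟨by simpa [row] using hr o, fun x hx => ?_⟩
    have hxo : x ≠ o := by rintro rfl; exact ho hx
    simpa [row, hxo, hx] using hr x
  have hmap : ∀ A ∈ (symFinset R s).filter fun A => A o = r,
      A c ∈ Fintype.piFinset row := by
    intro A hA
    rw [mem_filter, mem_symFinset] at hA
    rw [Fintype.mem_piFinset]
    intro x
    by_cases hx : x = o
    · subst hx
      simp [row, ← hA.2, hA.1.1.apply x c]
    · by_cases hsx : s x
      · have := hA.1.2.1 x hsx c
        rw [hA.1.1.apply] at this
        simpa [row, hx, hsx] using this
      · simp [row, hx, hsx]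
  rw [card_eq_sum_card_fiberwise hmap,
    sum_const_nat (m := (symFinset R fun x : {x // x ≠ o ∧ x ≠ c} => s x).card),
    Fintype.card_piFinset]
  · congr 1
    rw [← one_mul (nonunitCard R ^ _), ← prod_row_choices s ho]
    refine prod_congr rfl fun x _ => ?_
    simp only [row]
    split_ifs
    · simp
    · exact card_filter_mem_maximalIdeal
    · exact card_univ
  · intro r' hr
    obtain ⟨h1, h2⟩ := hrow r' hr
    let e : {x // x ≠ o ∧ x ≠ c} ⊕ Fin 2 ≃ σ :=
      Equiv.ofBijective (Sum.elim Subtype.val ![o, c]) (by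
        constructor
        · rintro (⟨x, hx⟩ | x) (⟨y, hy⟩ | y) h
          · simpa using h
          · fin_cases y
            · exact absurd h hx.1
            · exact absurd h hx.2
          · fin_cases x
            · exact absurd h.symm hy.1
            · exact absurd h.symm hy.2
          · fin_cases x <;> fin_cases y <;> simp_all
        · intro x
          by_cases hx : x = o
          · exact ⟨Sum.inr 0, hx.symm⟩
          · by_cases hx' : x = c
            · exact ⟨Sum.inr 1, hx'.symm⟩
            · exact ⟨Sum.inl ⟨x, hx, hx'⟩, rfl⟩)
    have e0 : e (Sum.inr 0) = o := rfl
    have e1 : e (Sum.inr 1) = c := rfl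
    refine Eq.trans ?_ (card_filter_rows_eq (R := R) e s ![r, r'] ?_ ?_ ?_ ?_)
    · congr 1
      ext A
      simp only [mem_filter, Fin.forall_fin_two, e0, e1]
      simp [and_assoc]
    · simp [Fin.forall_fin_two, e0, e1, h1]
    · rw [Matrix.det_fin_two]
      simp only [Matrix.of_apply, e0, e1, Matrix.cons_val_zero, Matrix.cons_val_one, h1]
      by_contra hcon
      rw [← mem_nonunits_iff, ← mem_maximalIdeal] at hcon
      have := Ideal.sub_mem _ (Ideal.mul_mem_right (r' c) _ hro) hcon
      rw [sub_sub_cancel] at this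
      exact (mem_nonunits_iff.1 ((mem_maximalIdeal _).1 this)) (hrc.mul hrc)
    · intro x hx
      simp only [Fin.forall_fin_two]
      exact ⟨hrs _ hx, h2 _ hx⟩
    · simp only [Fin.forall_fin_two, e0, e1]
      exact ⟨ho, hc⟩

/-- Number of symmetric matrices of size `i + j` with nonzero determinant and with entries of the
first `i` rows in the maximal ideal. -/
noncomputable def symCount (R : Type*) [CommRing R] [Fintype R] [IsLocalRing R] (i j : ℕ) : ℕ :=
  (symFinset R fun x : Fin i ⊕ Fin j => x.isLeft).card

open Classical in
theorem card_symFinset_eq_symCount {σ : Type*} [Fintype σ] [DecidableEq σ] (s : σ → Prop)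
    {i j : ℕ} (hi : (univ.filter s).card = i) (hj : (univ.filter fun x => ¬ s x).card = j) :
    (symFinset R s).card = symCount R i j := by
  rw [← Fintype.card_subtype] at hi hj
  have e1 := (Fintype.equivFinOfCardEq hi).symm
  have e2 := (Fintype.equivFinOfCardEq hj).symm
  refine (card_symFinset_congr ((Equiv.sumCongr e1 e2).trans (Equiv.sumCompl s)) _ _ ?_).symm
  rintro (x | x)
  · simpa using (e1 x).2
  · simpa using (e2 x).2

open Classical in
theorem card_filter_offdiag {σ : Type*} [Fintype σ] [DecidableEq σ] (s : σ → Prop) {o : σ}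
    (ho : ¬ s o) {i j : ℕ} (hi : (univ.filter s).card = i)
    (hj : (univ.filter fun x => ¬ s x).card = j + 1) :
    ((symFinset R s).filter fun A => ¬ IsUnit (A o o) ∧ ∃ c, IsUnit (A o c)).card =
      (nonunitCard R ^ (i + 1) * Fintype.card R ^ j - nonunitCard R ^ (i + 1 + j)) *
      (nonunitCard R ^ i * Fintype.card R ^ j * symCount R i (j - 1)) := by
  let row (x : σ) : Finset R := if x = o then univ.filter fun x : R => x ∈ maximalIdeal R
    else if s x then univ.filter fun x : R => x ∈ maximalIdeal R else univ
  let row' (x : σ) : Finset R := if x = o then univ.filter fun x : R => x ∈ maximalIdeal R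
    else if s x then univ.filter fun x : R => x ∈ maximalIdeal R
    else univ.filter fun x : R => x ∈ maximalIdeal R
  have hsub : Fintype.piFinset row' ⊆ Fintype.piFinset row := by
    refine Fintype.piFinset_subset _ _ fun x => ?_
    simp only [row, row']
    split_ifs <;> simp
  have hrow : ∀ r, r ∈ Fintype.piFinset row \ Fintype.piFinset row' ↔
      r o ∈ maximalIdeal R ∧ (∀ x, s x → r x ∈ maximalIdeal R) ∧ ∃ c, IsUnit (r c) := by
    intro r
    have h' : r ∈ Fintype.piFinset row' ↔ ¬ ∃ c, IsUnit (r c) := by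
      simp [row']
    have h : r ∈ Fintype.piFinset row ↔
        r o ∈ maximalIdeal R ∧ (∀ x, s x → r x ∈ maximalIdeal R) := by
      rw [Fintype.mem_piFinset]
      constructor
      · intro hr
        refine ⟨by simpa [row] using hr o, fun x hx => ?_⟩
        have hxo : x ≠ o := by rintro rfl; exact ho hx
        simpa [row, hxo, hx] using hr x
      · rintro ⟨h1, h2⟩ x
        by_cases hx : x = o
        · subst hx; simpa [row] using h1
        · by_cases hsx : s x
          · simpa [row, hx, hsx] using h2 x hsx
          · simp [row, hx, hsx]
    rw [mem_sdiff, h, h', not_not, and_assoc]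
  have hmap : ∀ A ∈ (symFinset R s).filter fun A => ¬ IsUnit (A o o) ∧ ∃ c, IsUnit (A o c),
      A o ∈ Fintype.piFinset row \ Fintype.piFinset row' := by
    intro A hA
    rw [mem_filter, mem_symFinset] at hA
    rw [hrow]
    refine ⟨hA.2.1, fun x hx => ?_, hA.2.2⟩
    have := hA.1.2.1 x hx o
    rwa [hA.1.1.apply] at this
  rw [card_eq_sum_card_fiberwise hmap, sum_const_nat
    (m := nonunitCard R ^ i * Fintype.card R ^ j * symCount R i (j - 1)),
    card_sdiff_of_subset hsub, Fintype.card_piFinset, Fintype.card_piFinset]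
  · congr 2
    · rw [pow_succ', ← hi, ← Nat.add_sub_cancel (n := j) (m := 1), ← hj, ← prod_row_choices s ho]
      refine prod_congr rfl fun x _ => ?_
      simp only [row]
      split_ifs
      · exact card_filter_mem_maximalIdeal
      · exact card_filter_mem_maximalIdeal
      · exact card_univ
    · rw [pow_add, pow_succ', ← hi, ← Nat.add_sub_cancel (n := j) (m := 1), ← hj,
        ← prod_row_choices s ho]
      refine prod_congr rfl fun x _ => ?_
      simp only [row']
      split_ifs <;> exact card_filter_mem_maximalIdeal
  · intro r hr
    obtain ⟨h1, h2, c, h3⟩ := (hrow r).1 hr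
    have hoc : o ≠ c := by rintro rfl; exact h1 h3
    have hc : ¬ s c := fun h => h2 c h h3
    have hset : ((symFinset R s).filter fun A => ¬ IsUnit (A o o) ∧ ∃ c, IsUnit (A o c)).filter
        (fun A => A o = r) = (symFinset R s).filter fun A => A o = r := by
      ext A
      simp only [mem_filter]
      constructor
      · rintro ⟨⟨h4, -⟩, h5⟩; exact ⟨h4, h5⟩
      · rintro ⟨h4, h5⟩
        exact ⟨⟨h4, by rw [h5]; exact ⟨h1, c, h3⟩⟩, h5⟩
    rw [hset, card_filter_pivot_pair s hoc ho hc r h1 h3 h2, hi, hj, Nat.add_sub_cancel]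
    congr 1
    apply card_symFinset_eq_symCount
    · rw [← hi, ← card_map (Function.Embedding.subtype _)]
      congr 1
      ext x
      simp only [mem_map, mem_filter, mem_univ, true_and, Function.Embedding.subtype_apply,
        Subtype.exists, exists_and_left, exists_prop, exists_eq_right_right]
      exact ⟨fun h => h.1, fun h => ⟨h, by rintro rfl; exact ho h, by rintro rfl; exact hc h⟩⟩
    · have h6 : ((univ.filter fun x => ¬ s x).erase o).erase c =
          (univ.filter fun x : {x // x ≠ o ∧ x ≠ c} => ¬ s x).map
            (Function.Embedding.subtype _) := by
        ext x
        simp only [mem_map, mem_filter, mem_univ, true_and, Function.Embedding.subtype_apply,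
          Subtype.exists, exists_and_left, exists_prop, exists_eq_right_right, mem_erase]
        tauto
      rw [← card_map (Function.Embedding.subtype _), ← h6, card_erase_of_mem, card_erase_of_mem,
        hj]
      · omega
      · simpa using ho
      · simpa using ⟨hoc.symm, hc⟩

open Classical in
theorem card_symFinset_succ {σ : Type*} [Fintype σ] [DecidableEq σ] (s : σ → Prop) {o : σ}
    (ho : ¬ s o) {i j : ℕ} (hi : (univ.filter s).card = i)
    (hj : (univ.filter fun x => ¬ s x).card = j + 1) :
    (symFinset R s).card =
      (Fintype.card R - nonunitCard R) * nonunitCard R ^ i * Fintype.card R ^ j * symCount R i j +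
      (nonunitCard R ^ (i + 1) * Fintype.card R ^ j - nonunitCard R ^ (i + 1 + j)) *
      (nonunitCard R ^ i * Fintype.card R ^ j * symCount R i (j - 1)) +
      symCount R (i + 1) j := by
  have h1 := card_filter_isUnit_diag (R := R) s ho
  have h2 := card_filter_offdiag (R := R) s ho hi hj
  have h3 : ((symFinset R s).filter fun A => ∀ c, ¬ IsUnit (A o c)) =
      symFinset R fun x => s x ∨ x = o := by
    ext A
    simp only [mem_filter, mem_symFinset]
    constructor
    · rintro ⟨⟨h1, h2, h3⟩, h4⟩
      refine ⟨h1, ?_, h3⟩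
      rintro a (ha | rfl) b
      · exact h2 a ha b
      · exact h4 b
    · rintro ⟨h1, h2, h3⟩
      exact ⟨⟨h1, fun a ha => h2 a (Or.inl ha), h3⟩, fun c => h2 o (Or.inr rfl) c⟩
  have h4 : (symFinset R fun x => s x ∨ x = o).card = symCount R (i + 1) j := by
    apply card_symFinset_eq_symCount
    · trans (insert o (univ.filter s)).card
      · congr 1
        ext x; simp only [mem_filter, mem_insert, mem_univ, true_and]; tauto
      · rw [card_insert_of_notMem (by simpa using ho), hi]
    · trans ((univ.filter fun x => ¬ s x).erase o).card
      · congr 1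
        ext x; simp only [mem_filter, mem_erase, mem_univ, true_and]; tauto
      · rw [card_erase_of_mem (by simpa using ho), hj, Nat.add_sub_cancel]
  have h5 : (symFinset R fun x : {x // x ≠ o} => s x).card = symCount R i j := by
    apply card_symFinset_eq_symCount
    · rw [← hi, ← card_map (Function.Embedding.subtype _)]
      congr 1
      ext x
      simp only [mem_map, mem_filter, mem_univ, true_and, Function.Embedding.subtype_apply,
        Subtype.exists, exists_and_left, exists_prop, exists_eq_right_right]
      exact ⟨fun h => h.1, fun h => ⟨h, by rintro rfl; exact ho h⟩⟩
    · have h6 : (univ.filter fun x => ¬ s x).erase o =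
          (univ.filter fun x : {x // x ≠ o} => ¬ s x).map (Function.Embedding.subtype _) := by
        ext x
        simp only [mem_map, mem_filter, mem_univ, true_and, Function.Embedding.subtype_apply,
          Subtype.exists, exists_and_left, exists_prop, exists_eq_right_right, mem_erase]
        tauto
      rw [← card_map (Function.Embedding.subtype _), ← h6, card_erase_of_mem (by simpa using ho),
        hj, Nat.add_sub_cancel]
  rw [hi, hj, Nat.add_sub_cancel, h5] at h1
  rw [← h1, ← h2, ← h4, ← h3, ← card_union_of_disjoint, ← card_union_of_disjoint]
  · congr 1
    ext A
    simp only [mem_union, mem_filter]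
    by_cases hu : IsUnit (A o o)
    · simp only [hu]; tauto
    · by_cases hc : ∃ c, IsUnit (A o c)
      · simp [hu, hc]
      · have hc' := not_exists.1 hc
        simp [hc']
  · rw [disjoint_left]
    intro A hA hA'
    simp only [mem_union, mem_filter] at hA hA'
    rcases hA with ⟨-, hA⟩ | ⟨-, -, c, hc⟩
    · exact hA'.2 _ hA
    · exact hA'.2 _ hc
  · rw [disjoint_filter]
    intro A _ h h'
    exact h'.1 h

theorem symCount_succ (i j : ℕ) :
    symCount R i (j + 1) =
      (Fintype.card R - nonunitCard R) * nonunitCard R ^ i * Fintype.card R ^ j * symCount R i j +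
      (nonunitCard R ^ (i + 1) * Fintype.card R ^ j - nonunitCard R ^ (i + 1 + j)) *
      (nonunitCard R ^ i * Fintype.card R ^ j * symCount R i (j - 1)) +
      symCount R (i + 1) j := by
  classical
  refine card_symFinset_succ (fun x : Fin i ⊕ Fin (j + 1) => x.isLeft) (o := Sum.inr 0)
    (by simp) ?_ ?_
  · trans (univ.map (Function.Embedding.inl : Fin i ↪ Fin i ⊕ Fin (j + 1))).card
    · congr 1
      ext (x | x) <;> simp
    · simp
  · trans (univ.map (Function.Embedding.inr : Fin (j + 1) ↪ Fin i ⊕ Fin (j + 1))).card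
    · congr 1
      ext (x | x) <;> simp
    · simp

end Counting

section PrimePower

theorem card_subtype_comp_mul_card {G H : Type*} [AddGroup G] [AddGroup H] [Finite G] [Finite H]
    (φ : G →+ H) (hφ : Function.Surjective φ) (P : H → Prop) :
    Nat.card {g // P (φ g)} * Nat.card H = Nat.card {h // P h} * Nat.card G := by
  have hker : ∀ h, Nat.card {g // φ g = h} = Nat.card φ.ker := by
    intro h
    obtain ⟨g₀, rfl⟩ := hφ h
    refine Nat.card_congr ⟨fun g => ⟨g.1 - g₀, by simp [AddMonoidHom.mem_ker, g.2]⟩,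
      fun k => ⟨k.1 + g₀, by simp [AddMonoidHom.mem_ker.1 k.2]⟩, fun g => by simp,
      fun k => by simp⟩
  have hsub : Nat.card {g // P (φ g)} = Nat.card {h // P h} * Nat.card φ.ker := by
    have e : {g // P (φ g)} ≃ Σ h : {h // P h}, {g // φ g = h.1} :=
      ⟨fun g => ⟨⟨φ g.1, g.2⟩, g.1, rfl⟩, fun x => ⟨x.2.1, by rw [x.2.2]; exact x.1.2⟩,
        fun g => rfl, by rintro ⟨⟨h, hh⟩, g, hg⟩; cases hg; rfl⟩
    have := Fintype.ofFinite {h // P h}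
    rw [Nat.card_congr e, Nat.card_sigma, Finset.sum_congr rfl fun h _ => hker h.1]
    simp
  have hG : Nat.card G = Nat.card H * Nat.card φ.ker := by
    have := Fintype.ofFinite H
    rw [Nat.card_congr (Equiv.sigmaFiberEquiv φ).symm, Nat.card_sigma,
      Finset.sum_congr rfl fun h _ => hker h]
    simp
  rw [hsub, hG]
  ring

variable {p μ : ℕ}

theorem not_isUnit_zmod_iff (hp : p.Prime) (hμ : 1 ≤ μ) (x : ZMod (p ^ μ)) :
    ¬ IsUnit x ↔ ∃ y, x = p * y := by
  have : NeZero (p ^ μ) := ⟨pow_ne_zero _ hp.ne_zero⟩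
  obtain ⟨n, rfl⟩ := ZMod.natCast_zmod_surjective x
  rw [ZMod.isUnit_natCast_iff_not_dvd_pow hp hμ, not_not]
  constructor
  · rintro ⟨y, rfl⟩; exact ⟨y, by push_cast; rfl⟩
  · rintro ⟨y, hy⟩
    obtain ⟨m, rfl⟩ := ZMod.natCast_zmod_surjective y
    have h := congrArg (ZMod.castHom (dvd_pow_self p (by omega : μ ≠ 0)) (ZMod p)) hy
    rw [map_mul, map_natCast, map_natCast, ZMod.natCast_self, zero_mul] at h
    exact (ZMod.natCast_eq_zero_iff _ _).1 h

theorem isLocalRing_zmod_prime_pow (hp : p.Prime) (hμ : 1 ≤ μ) : IsLocalRing (ZMod (p ^ μ)) := by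
  have : Fact (1 < p ^ μ) := ⟨Nat.one_lt_pow (by omega) hp.one_lt⟩
  refine IsLocalRing.of_nonunits_add fun a b ha hb => ?_
  rw [mem_nonunits_iff, not_isUnit_zmod_iff hp hμ] at ha hb ⊢
  obtain ⟨x, rfl⟩ := ha
  obtain ⟨y, rfl⟩ := hb
  exact ⟨x + y, by ring⟩

theorem nonunitCard_zmod (hp : p.Prime) (hμ : 1 ≤ μ) [IsLocalRing (ZMod (p ^ μ))] :
    nonunitCard (ZMod (p ^ μ)) * p = p ^ μ := by
  have : NeZero (p ^ μ) := ⟨pow_ne_zero _ hp.ne_zero⟩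
  have : NeZero p := ⟨hp.ne_zero⟩
  let φ := ZMod.castHom (dvd_pow_self p (by omega : μ ≠ 0)) (ZMod p)
  have hφ : Function.Surjective φ := ZMod.castHom_surjective _
  have h := card_subtype_comp_mul_card φ.toAddMonoidHom hφ (fun x => x = 0)
  rw [Nat.card_zmod, Nat.card_zmod, Nat.card_unique (α := {x : ZMod p // x = 0}), one_mul] at h
  refine Eq.trans ?_ h
  rw [nonunitCard]
  congr 1
  refine Nat.card_congr (Equiv.subtypeEquivRight fun x => ?_)
  obtain ⟨n, rfl⟩ := ZMod.natCast_zmod_surjective x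
  rw [mem_maximalIdeal, mem_nonunits_iff, ZMod.isUnit_natCast_iff_not_dvd_pow hp hμ, not_not]
  simp [φ, ZMod.natCast_eq_zero_iff]

theorem prime_pow_mul_eq_zero_iff (hp : p.Prime) (n : ℕ) (x : ZMod (p ^ μ)) :
    (p : ZMod (p ^ μ)) ^ n * x = 0 ↔
      ZMod.castHom (pow_dvd_pow p (Nat.sub_le μ n)) (ZMod (p ^ (μ - n))) x = 0 := by
  have : NeZero (p ^ μ) := ⟨pow_ne_zero _ hp.ne_zero⟩
  obtain ⟨y, rfl⟩ := ZMod.natCast_zmod_surjective x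
  rw [map_natCast, ZMod.natCast_eq_zero_iff, ← Nat.cast_pow, ← Nat.cast_mul,
    ZMod.natCast_eq_zero_iff]
  rcases le_total n μ with h | h
  · obtain ⟨d, rfl⟩ := Nat.exists_eq_add_of_le h
    rw [Nat.add_sub_cancel_left, pow_add]
    exact Nat.mul_dvd_mul_iff_left (pow_pos hp.pos n)
  · rw [Nat.sub_eq_zero_of_le h, pow_zero]
    exact iff_of_true (Dvd.dvd.mul_right (pow_dvd_pow p h) y) (one_dvd _)

/-- The symmetric matrix with prescribed entries on unordered pairs. -/
def symOf {n : ℕ} {R : Type*} (f : Sym2 (Fin n) → R) : Matrix (Fin n) (Fin n) R :=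
  Matrix.of fun a b => f s(a, b)

/-- Symmetric matrices are functions on unordered pairs. -/
def symOfEquiv (n : ℕ) (R : Type*) :
    (Sym2 (Fin n) → R) ≃ {A : Matrix (Fin n) (Fin n) R // A.IsSymm} where
  toFun f := ⟨symOf f, by ext a b; simp [symOf, Sym2.eq_swap]⟩
  invFun A := fun z => Sym2.lift ⟨fun a b => A.1 a b, fun a b => A.2.apply b a⟩ z
  left_inv f := by ext z; induction z with | h a b => simp [symOf]
  right_inv A := by ext a b; simp [symOf]

theorem Nsym_eq_card_symOf (n m : ℕ) :
    Nsym n m = Nat.card {f : Sym2 (Fin n) → ZMod m // (symOf f).det ≠ 0} := by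
  rw [Nsym]
  refine Nat.card_congr ((Equiv.subtypeSubtypeEquivSubtypeInter _ _).symm.trans
    (Equiv.subtypeEquiv (symOfEquiv n (ZMod m)).symm fun A => ?_))
  obtain ⟨f, rfl⟩ := (symOfEquiv n (ZMod m)).surjective A
  rw [Equiv.symm_apply_apply]
  rfl

theorem card_sym2_fun (n : ℕ) (R : Type*) [Finite R] :
    Nat.card (Sym2 (Fin n) → R) = Nat.card R ^ (n * (n + 1) / 2) := by
  rw [Nat.card_fun, Nat.card_eq_fintype_card (α := Sym2 (Fin n)), Sym2.card, Fintype.card_fin,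
    Nat.choose_two_right, Nat.add_sub_cancel, mul_comm]

theorem symCount_zero_left [NeZero (p ^ μ)] [IsLocalRing (ZMod (p ^ μ))] (n : ℕ) :
    symCount (ZMod (p ^ μ)) 0 n = Nsym n (p ^ μ) := by
  classical
  rw [← card_symFinset_eq_symCount (fun _ : Fin n => False) (by simp) (by simp), Nsym,
    ← Nat.card_eq_finsetCard]
  refine Nat.card_congr (Equiv.subtypeEquivRight fun A => ?_)
  simp [mem_symFinset]

theorem symCount_zero_right [NeZero (p ^ μ)] [IsLocalRing (ZMod (p ^ μ))] (n : ℕ) :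
    symCount (ZMod (p ^ μ)) n 0 = Nat.card {f : Sym2 (Fin n) → maximalIdeal (ZMod (p ^ μ)) //
      (symOf fun z => (f z : ZMod (p ^ μ))).det ≠ 0} := by
  classical
  rw [← card_symFinset_eq_symCount (fun _ : Fin n => True) (by simp) (by simp),
    ← Nat.card_eq_finsetCard]
  refine Nat.card_congr (Equiv.symm ⟨fun f => ⟨symOf fun z => (f.1 z : ZMod (p ^ μ)), ?_⟩,
    fun A => ⟨fun z => ⟨(symOfEquiv n _).symm ⟨A.1, (mem_symFinset.1 A.2).1⟩ z, ?_⟩, ?_⟩, ?_, ?_⟩)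
  · rw [mem_symFinset]
    exact ⟨(symOfEquiv n _ fun z => (f.1 z : ZMod (p ^ μ))).2, fun a _ b => (f.1 s(a, b)).2, f.2⟩
  · induction z with | h a b => exact (mem_symFinset.1 A.2).2.1 a trivial b
  · exact (mem_symFinset.1 A.2).2.2
  · intro f
    ext z
    induction z with | h a b => rfl
  · intro A
    ext a b
    rfl

theorem symCount_zero_right_eq (hp : p.Prime) (hμ : 1 ≤ μ) [NeZero (p ^ μ)]
    [IsLocalRing (ZMod (p ^ μ))] (n : ℕ) :
    (symCount (ZMod (p ^ μ)) n 0 : ℝ) / (nonunitCard (ZMod (p ^ μ)) : ℝ) ^ (n * (n + 1) / 2) =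
      Psym n (p ^ (μ - n)) := by
  have : NeZero (p ^ (μ - n)) := ⟨pow_ne_zero _ hp.ne_zero⟩
  have hpI : ∀ x : ZMod (p ^ μ), p * x ∈ maximalIdeal (ZMod (p ^ μ)) := fun x => by
    rw [mem_maximalIdeal, mem_nonunits_iff, not_isUnit_zmod_iff hp hμ]
    exact ⟨x, rfl⟩
  let ψ : ZMod (p ^ μ) →+ maximalIdeal (ZMod (p ^ μ)) :=
    { toFun := fun x => ⟨p * x, hpI x⟩
      map_zero' := by ext; simp
      map_add' := fun x y => by ext; simp [mul_add] }
  have hψ : Function.Surjective ψ := by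
    rintro ⟨x, hx⟩
    rw [mem_maximalIdeal, mem_nonunits_iff, not_isUnit_zmod_iff hp hμ] at hx
    obtain ⟨y, rfl⟩ := hx
    exact ⟨y, rfl⟩
  let φ := ZMod.castHom (pow_dvd_pow p (Nat.sub_le μ n)) (ZMod (p ^ (μ - n)))
  have hφ : Function.Surjective φ := ZMod.castHom_surjective _
  have h1 := card_subtype_comp_mul_card (ψ.compLeft (Sym2 (Fin n))) hψ.comp_left
    (fun f => (symOf fun z => (f z : ZMod (p ^ μ))).det ≠ 0)
  have h2 := card_subtype_comp_mul_card (φ.toAddMonoidHom.compLeft (Sym2 (Fin n))) hφ.comp_left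
    (fun f => (symOf f).det ≠ 0)
  rw [← symCount_zero_right, card_sym2_fun] at h1
  rw [← Nsym_eq_card_symOf, card_sym2_fun, Nat.card_zmod] at h2
  have h3 : Nat.card {g : Sym2 (Fin n) → ZMod (p ^ μ) //
        (symOf fun z => (ψ.compLeft (Sym2 (Fin n)) g z : ZMod (p ^ μ))).det ≠ 0} =
      Nat.card {g : Sym2 (Fin n) → ZMod (p ^ μ) //
        (symOf (φ.toAddMonoidHom.compLeft (Sym2 (Fin n)) g)).det ≠ 0} := by
    refine Nat.card_congr (Equiv.subtypeEquivRight fun g => not_congr ?_)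
    have e1 : (symOf fun z => (ψ.compLeft (Sym2 (Fin n)) g z : ZMod (p ^ μ))) =
        (p : ZMod (p ^ μ)) • symOf g := by
      ext a b; simp [symOf, ψ]
    have e2 : symOf (φ.toAddMonoidHom.compLeft (Sym2 (Fin n)) g) = φ.mapMatrix (symOf g) := by
      ext a b; simp [symOf]
    rw [e1, e2, Matrix.det_smul, ← RingHom.map_det, Fintype.card_fin]
    exact prime_pow_mul_eq_zero_iff hp n _
  rw [h3] at h1
  have hG : (Nat.card (Sym2 (Fin n) → ZMod (p ^ μ)) : ℝ) ≠ 0 :=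
    Nat.cast_ne_zero.2 Nat.card_pos.ne'
  have hI : (nonunitCard (ZMod (p ^ μ)) : ℝ) ≠ 0 := Nat.cast_ne_zero.2 Nat.card_pos.ne'
  have hm : ((p ^ (μ - n) : ℕ) : ℝ) ≠ 0 := Nat.cast_ne_zero.2 (NeZero.ne _)
  have hcast_ideal := congrArg (Nat.cast : ℕ → ℝ) h1
  have hcast_quot := congrArg (Nat.cast : ℕ → ℝ) h2
  rw [Nat.cast_mul, Nat.cast_mul, Nat.cast_pow] at hcast_ideal hcast_quot
  rw [Psym, div_eq_div_iff (pow_ne_zero _ hI) (pow_ne_zero _ hm)]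
  apply mul_right_cancel₀ hG
  change _ * (nonunitCard (ZMod (p ^ μ)) : ℝ) ^ _ = _ at hcast_ideal
  linear_combination -((p ^ (μ - n) : ℕ) : ℝ) ^ (n * (n + 1) / 2) * hcast_ideal +
    (nonunitCard (ZMod (p ^ μ)) : ℝ) ^ (n * (n + 1) / 2) * hcast_quot

/-- The exponent of `q` in the weight of `symCount R i j`. -/
def markedPairs (i j : ℕ) : ℕ := i * (i + 1) / 2 + i * j

/-- A family of densities interpolating between `Psym n (p ^ μ)` and `Psym n (p ^ (μ - n))`. -/
theorem exists_symDensity (hp : p.Prime) (hμ : 1 ≤ μ) (q : ℝ) (hq : q = 1 / p) : ∃ f : ℕ → ℕ → ℝ,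
    (∀ n, f 0 n = Psym n (p ^ μ)) ∧ (∀ n, f n 0 = Psym n (p ^ (μ - n))) ∧
    ∀ i j, f i (j + 1) = (1 - q) * f i j + q * (1 - q ^ j) * f i (j - 1) +
      q ^ (j + 1) * f (i + 1) j := by
  have : NeZero (p ^ μ) := ⟨pow_ne_zero _ hp.ne_zero⟩
  have := isLocalRing_zmod_prime_pow hp hμ
  have hp0 : (p : ℝ) ≠ 0 := Nat.cast_ne_zero.2 hp.ne_zero
  have hq0 : q ≠ 0 := by rw [hq]; positivity
  set N : ℝ := ((p ^ μ : ℕ) : ℝ) with hN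
  have hN0 : N ≠ 0 := Nat.cast_ne_zero.2 (NeZero.ne _)
  have hI : (nonunitCard (ZMod (p ^ μ)) : ℝ) = q * N := by
    have h := congrArg (Nat.cast : ℕ → ℝ) (nonunitCard_zmod hp hμ)
    rw [hN, ← h, hq]; push_cast; field_simp
  have htri : ∀ n : ℕ, (n + 1) * (n + 2) / 2 = n * (n + 1) / 2 + (n + 1) := fun n => by
    rw [show (n + 1) * (n + 2) = n * (n + 1) + (n + 1) * 2 by ring,
      Nat.add_mul_div_right _ _ (by norm_num)]
  refine ⟨fun i j => symCount (ZMod (p ^ μ)) i j /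
    (N ^ ((i + j) * (i + j + 1) / 2) * q ^ markedPairs i j), fun n => ?_, fun n => ?_, ?_⟩
  · simp [markedPairs, symCount_zero_left, Psym, hN]
  · rw [← symCount_zero_right_eq hp hμ, hI, mul_pow]
    simp [markedPairs, mul_comm]
  · intro i j
    have hle1 : nonunitCard (ZMod (p ^ μ)) ≤ Fintype.card (ZMod (p ^ μ)) := by
      rw [ZMod.card]
      exact (Nat.le_mul_of_pos_right _ hp.pos).trans (nonunitCard_zmod hp hμ).le
    have hrec := congrArg (Nat.cast : ℕ → ℝ) (symCount_succ (R := ZMod (p ^ μ)) i j)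
    rw [Nat.cast_add, Nat.cast_add, Nat.cast_mul, Nat.cast_mul, Nat.cast_mul, Nat.cast_mul,
      Nat.cast_sub hle1, Nat.cast_sub (by rw [pow_add]; gcongr)] at hrec
    simp only [Nat.cast_mul, Nat.cast_pow, hI, ZMod.card] at hrec
    rw [← Nat.cast_pow, ← hN] at hrec
    have hw1 : N ^ ((i + (j + 1)) * (i + (j + 1) + 1) / 2) * q ^ markedPairs i (j + 1) =
        N ^ ((i + j) * (i + j + 1) / 2) * q ^ markedPairs i j * (N ^ (i + j + 1) * q ^ i) := by
      rw [markedPairs, markedPairs, ← add_assoc, htri]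
      ring
    have hw3 : N ^ ((i + 1 + j) * (i + 1 + j + 1) / 2) * q ^ markedPairs (i + 1) j =
        N ^ ((i + j) * (i + j + 1) / 2) * q ^ markedPairs i j * (N ^ (i + j + 1) * q ^ i) *
          q ^ (j + 1) := by
      rw [markedPairs, markedPairs, add_right_comm i 1 j, htri, htri i]
      ring
    beta_reduce
    rw [hw1, hw3, hrec]
    rcases j with _ | j
    · field_simp
      ring
    · have hw2 : N ^ ((i + (j + 1)) * (i + (j + 1) + 1) / 2) * q ^ markedPairs i (j + 1) =
          N ^ ((i + j) * (i + j + 1) / 2) * q ^ markedPairs i j * (N ^ (i + j + 1) * q ^ i) := by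
        rw [markedPairs, markedPairs, ← add_assoc, htri]
        ring
      rw [Nat.add_sub_cancel, hw2]
      field_simp
      ring

end PrimePower

section CorankDistribution

variable {q : ℝ}

/-- The product of `1 - q ^ l` over the first `k` odd numbers `l`. -/
noncomputable def oddProd (q : ℝ) (k : ℕ) : ℝ := ∏ l ∈ range k, (1 - q ^ (2 * l + 1))

/-- `q ^ (k * (2 * k + 1))` times the Gaussian binomial coefficient of base `q ^ 2`. -/
noncomputable def scaledGauss (q : ℝ) (m k : ℕ) : ℝ :=
  ∏ l ∈ range k, q ^ (2 * l + 3) * (q ^ (2 * l) - q ^ (2 * m)) / (1 - q ^ (2 * l + 2))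

/-- The proportion of symmetric matrices of size `2 * m` and corank `2 * k`. -/
noncomputable def evenCorank (q : ℝ) (m k : ℕ) : ℝ :=
  oddProd q m * scaledGauss q m k / oddProd q k

/-- The proportion of symmetric matrices of size `n` and corank `r`. -/
noncomputable def corankProp (q : ℝ) (n r : ℕ) : ℝ :=
  (if n % 2 = 0 then (if r % 2 = 0 then 1 else (q ^ r - q ^ (n + 1)) / (1 - q ^ r))
    else (if r % 2 = 0 then 1 - q ^ n else q ^ r * (1 - q ^ n) / (1 - q ^ r))) *
  evenCorank q (n / 2) (r / 2)

theorem corankProp_even_even (m k : ℕ) : corankProp q (2 * m) (2 * k) = evenCorank q m k := by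
  simp [corankProp]

theorem corankProp_even_odd (m k : ℕ) : corankProp q (2 * m) (2 * k + 1) =
    (q ^ (2 * k + 1) - q ^ (2 * m + 1)) / (1 - q ^ (2 * k + 1)) * evenCorank q m k := by
  simp [corankProp, Nat.add_mod, show (2 * k + 1) / 2 = k by omega]

theorem corankProp_odd_even (m k : ℕ) : corankProp q (2 * m + 1) (2 * k) =
    (1 - q ^ (2 * m + 1)) * evenCorank q m k := by
  simp [corankProp, Nat.add_mod, show (2 * m + 1) / 2 = m by omega]

theorem corankProp_odd_odd (m k : ℕ) : corankProp q (2 * m + 1) (2 * k + 1) =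
    q ^ (2 * k + 1) * (1 - q ^ (2 * m + 1)) / (1 - q ^ (2 * k + 1)) * evenCorank q m k := by
  simp [corankProp, Nat.add_mod, show (2 * m + 1) / 2 = m by omega,
    show (2 * k + 1) / 2 = k by omega]

theorem one_sub_pow_ne_zero (h0 : 0 < q) (h1 : q < 1) {n : ℕ} (hn : n ≠ 0) : 1 - q ^ n ≠ 0 :=
  (sub_pos.2 (pow_lt_one₀ h0.le h1 hn)).ne'

theorem oddProd_ne_zero (h0 : 0 < q) (h1 : q < 1) (k : ℕ) : oddProd q k ≠ 0 :=
  prod_ne_zero_iff.2 fun _ _ => one_sub_pow_ne_zero h0 h1 (by omega)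

theorem oddProd_succ (k : ℕ) : oddProd q (k + 1) = oddProd q k * (1 - q ^ (2 * k + 1)) :=
  prod_range_succ _ _

theorem scaledGauss_zero_right (m : ℕ) : scaledGauss q m 0 = 1 := prod_range_zero _

theorem scaledGauss_self_succ (m : ℕ) : scaledGauss q m (m + 1) = 0 := by
  simp [scaledGauss, prod_range_succ]

theorem scaledGauss_zero_succ (k : ℕ) : scaledGauss q 0 (k + 1) = 0 := by
  simp [scaledGauss, prod_range_succ']

theorem scaledGauss_succ_right (h0 : 0 < q) (h1 : q < 1) (m k : ℕ) :
    (1 - q ^ (2 * k + 2)) * scaledGauss q m (k + 1) =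
      q ^ (2 * k + 3) * (q ^ (2 * k) - q ^ (2 * m)) * scaledGauss q m k := by
  have := one_sub_pow_ne_zero h0 h1 (n := 2 * k + 2) (by omega)
  rw [scaledGauss, scaledGauss, prod_range_succ]
  field_simp

theorem scaledGauss_succ_left (h0 : 0 < q) (h1 : q < 1) (m k : ℕ) :
    (q ^ (2 * k) - q ^ (2 * m + 2)) * scaledGauss q (m + 1) k =
      q ^ (2 * k) * (1 - q ^ (2 * m + 2)) * scaledGauss q m k := by
  induction k with
  | zero => simp [scaledGauss_zero_right]
  | succ k ih =>
    have h := one_sub_pow_ne_zero h0 h1 (n := 2 * k + 2) (by omega)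
    have e1 := scaledGauss_succ_right h0 h1 (m + 1) k
    have e2 := scaledGauss_succ_right h0 h1 m k
    apply mul_left_cancel₀ h
    rw [show 2 * (m + 1) = 2 * m + 2 by ring] at e1
    linear_combination (q ^ (2 * (k + 1)) - q ^ (2 * m + 2)) * e1 -
      q ^ (2 * (k + 1)) * (1 - q ^ (2 * m + 2)) * e2 +
      (q ^ (2 * (k + 1)) - q ^ (2 * m + 2)) * q ^ (2 * k + 3) * ih

theorem scaledGauss_succ_succ (h0 : 0 < q) (h1 : q < 1) (m k : ℕ) :
    (1 - q ^ (2 * k + 2)) * scaledGauss q (m + 1) (k + 1) =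
      q ^ (2 * k + 3) * q ^ (2 * k) * (1 - q ^ (2 * m + 2)) * scaledGauss q m k := by
  have e1 := scaledGauss_succ_right h0 h1 (m + 1) k
  have e2 := scaledGauss_succ_left h0 h1 m k
  rw [show 2 * (m + 1) = 2 * m + 2 by ring] at e1
  linear_combination e1 + q ^ (2 * k + 3) * e2

theorem scaledGauss_pascal (h0 : 0 < q) (h1 : q < 1) (m k : ℕ) :
    scaledGauss q (m + 1) (k + 1) =
      scaledGauss q m (k + 1) + q ^ (2 * m + 2 * k + 3) * scaledGauss q m k := by
  apply mul_left_cancel₀ (one_sub_pow_ne_zero h0 h1 (n := 2 * k + 2) (by omega))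
  linear_combination scaledGauss_succ_succ h0 h1 m k - scaledGauss_succ_right h0 h1 m k

theorem evenCorank_zero_right (m : ℕ) : evenCorank q m 0 = oddProd q m := by
  simp [evenCorank, scaledGauss_zero_right, oddProd]

theorem evenCorank_zero_succ (k : ℕ) : evenCorank q 0 (k + 1) = 0 := by
  simp [evenCorank, scaledGauss_zero_succ]

theorem evenCorank_succ_right (h0 : 0 < q) (h1 : q < 1) (m k : ℕ) :
    (1 - q ^ (2 * k + 2)) * (1 - q ^ (2 * k + 1)) * evenCorank q m (k + 1) =
      q ^ (2 * k + 3) * (q ^ (2 * k) - q ^ (2 * m)) * evenCorank q m k := by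
  have := oddProd_ne_zero h0 h1 k
  have := one_sub_pow_ne_zero h0 h1 (n := 2 * k + 1) (by omega)
  have e := scaledGauss_succ_right h0 h1 m k
  rw [evenCorank, evenCorank, oddProd_succ]
  field_simp
  linear_combination oddProd q m * e

theorem evenCorank_succ_left (h0 : 0 < q) (h1 : q < 1) (m k : ℕ) :
    (q ^ (2 * k) - q ^ (2 * m + 2)) * evenCorank q (m + 1) k =
      q ^ (2 * k) * (1 - q ^ (2 * m + 1)) * (1 - q ^ (2 * m + 2)) * evenCorank q m k := by
  have := oddProd_ne_zero h0 h1 k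
  have e := scaledGauss_succ_left h0 h1 m k
  rw [evenCorank, evenCorank, oddProd_succ]
  field_simp
  linear_combination oddProd q m * (1 - q ^ (2 * m + 1)) * e

theorem evenCorank_succ_succ (h0 : 0 < q) (h1 : q < 1) (m k : ℕ) :
    (1 - q ^ (2 * k + 2)) * (1 - q ^ (2 * k + 1)) * evenCorank q (m + 1) (k + 1) =
      q ^ (2 * k + 3) * q ^ (2 * k) * (1 - q ^ (2 * m + 1)) * (1 - q ^ (2 * m + 2)) *
        evenCorank q m k := by
  have e1 := evenCorank_succ_right h0 h1 (m + 1) k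
  have e2 := evenCorank_succ_left h0 h1 m k
  rw [show 2 * (m + 1) = 2 * m + 2 by ring] at e1
  linear_combination e1 + q ^ (2 * k + 3) * e2

theorem corankProp_zero_zero : corankProp q 0 0 = 1 := by
  simp [corankProp, evenCorank, scaledGauss_zero_right, oddProd]

theorem corankProp_zero_succ (r : ℕ) : corankProp q 0 (r + 1) = 0 := by
  rcases Nat.even_or_odd' r with ⟨k, rfl | rfl⟩
  · rw [← mul_zero 2, corankProp_even_odd]
    rcases k with _ | k
    · simp
    · rw [evenCorank_zero_succ, mul_zero]
  · rw [← mul_zero 2, show 2 * k + 1 + 1 = 2 * (k + 1) by ring, corankProp_even_even,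
      evenCorank_zero_succ]

theorem corankProp_succ_zero (j : ℕ) : corankProp q (j + 1) 0 =
    (1 - q) * corankProp q j 0 + q * (1 - q ^ j) * corankProp q (j - 1) 0 := by
  rw [← mul_zero 2]
  rcases Nat.even_or_odd' j with ⟨m, rfl | rfl⟩
  · rcases m with _ | m
    · rw [corankProp_odd_even, corankProp_even_even]
      simp
    · rw [show 2 * (m + 1) - 1 = 2 * m + 1 by omega]
      simp only [corankProp_odd_even, corankProp_even_even, evenCorank_zero_right, oddProd_succ]
      ring
  · rw [show 2 * m + 1 + 1 = 2 * (m + 1) by ring, Nat.add_sub_cancel]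
    simp only [corankProp_odd_even, corankProp_even_even, evenCorank_zero_right, oddProd_succ]
    ring

theorem corankProp_one_succ (h0 : 0 < q) (h1 : q < 1) (r : ℕ) :
    corankProp q 1 (r + 1) = q * corankProp q 0 r := by
  rcases r with _ | r
  · rw [corankProp_zero_zero]
    have := corankProp_odd_odd (q := q) 0 0
    have h := one_sub_pow_ne_zero h0 h1 (n := 1) one_ne_zero
    simp only [mul_zero, zero_add, evenCorank_zero_right, oddProd, range_zero, prod_empty,
      pow_one] at this h ⊢
    rw [this]
    field_simp
  · rw [corankProp_zero_succ, mul_zero]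
    rcases Nat.even_or_odd' r with ⟨k, rfl | rfl⟩
    · refine (corankProp_odd_even 0 (k + 1)).trans ?_
      rw [evenCorank_zero_succ]
      exact mul_zero _
    · refine (corankProp_odd_odd 0 (k + 1)).trans ?_
      rw [evenCorank_zero_succ]
      exact mul_zero _

theorem corankProp_succ_succ (h0 : 0 < q) (h1 : q < 1) (j r : ℕ) : corankProp q (j + 1) (r + 1) =
    (1 - q) * corankProp q j (r + 1) + q * (1 - q ^ j) * corankProp q (j - 1) (r + 1) +
      q ^ (j + 1) * corankProp q j r := by
  rcases Nat.even_or_odd' j with ⟨m, rfl | rfl⟩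
  · rcases m with _ | m
    · rw [mul_zero, corankProp_zero_succ, corankProp_one_succ h0 h1]
      simp
    rw [show 2 * (m + 1) - 1 = 2 * m + 1 by omega]
    rcases Nat.even_or_odd' r with ⟨k, rfl | rfl⟩
    · have h := one_sub_pow_ne_zero h0 h1 (n := 2 * k + 1) (by omega)
      rw [corankProp_odd_odd, corankProp_odd_odd, corankProp_even_odd, corankProp_even_even]
      have e := evenCorank_succ_left h0 h1 m k
      field_simp
      linear_combination q ^ 2 * e
    · have h := one_sub_pow_ne_zero h0 h1 (n := 2 * k + 1) (by omega)
      have h' := one_sub_pow_ne_zero h0 h1 (n := 2 * k + 2) (by omega)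
      rw [show 2 * k + 1 + 1 = 2 * (k + 1) by ring, corankProp_odd_even, corankProp_odd_even,
        corankProp_even_odd, corankProp_even_even]
      have e1 := evenCorank_succ_right h0 h1 m k
      have e2 := evenCorank_succ_succ h0 h1 m k
      have e3 := evenCorank_succ_left h0 h1 m k
      field_simp
      apply mul_left_cancel₀ h'
      linear_combination (q - q ^ (2 * m + 3)) * e2 -
        q * (1 - q ^ (2 * m + 2)) * (1 - q ^ (2 * m + 1)) * e1 -
        q ^ (2 * m + 4) * (1 - q ^ (2 * k + 2)) * e3
  · rw [Nat.add_sub_cancel, show 2 * m + 1 + 1 = 2 * (m + 1) by ring]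
    rcases Nat.even_or_odd' r with ⟨k, rfl | rfl⟩
    · have h := one_sub_pow_ne_zero h0 h1 (n := 2 * k + 1) (by omega)
      rw [corankProp_odd_odd, corankProp_even_odd, corankProp_even_odd, corankProp_odd_even]
      have e := evenCorank_succ_left h0 h1 m k
      field_simp
      linear_combination q * e
    · have h := one_sub_pow_ne_zero h0 h1 (n := 2 * k + 1) (by omega)
      have h' := one_sub_pow_ne_zero h0 h1 (n := 2 * k + 2) (by omega)
      rw [show 2 * k + 1 + 1 = 2 * (k + 1) by ring, corankProp_odd_odd, corankProp_odd_even,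
        corankProp_even_even, corankProp_even_even]
      have e1 := evenCorank_succ_right h0 h1 m k
      have e2 := evenCorank_succ_succ h0 h1 m k
      field_simp
      apply mul_left_cancel₀ h'
      linear_combination e2 - (1 - q ^ (2 * m + 1)) * e1

theorem eq_sum_corankProp (h0 : 0 < q) (h1 : q < 1) {f : ℕ → ℕ → ℝ}
    (hf : ∀ i j, f i (j + 1) = (1 - q) * f i j + q * (1 - q ^ j) * f i (j - 1) +
      q ^ (j + 1) * f (i + 1) j) (j : ℕ) :
    ∀ i L, j < L → f i j = ∑ r ∈ range L, corankProp q j r * f (i + r) 0 := by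
  induction j using Nat.strong_induction_on with
  | _ j ih =>
    intro i L hL
    obtain ⟨L, rfl⟩ := Nat.exists_eq_add_of_lt (Nat.zero_lt_of_lt hL)
    rw [zero_add] at hL ⊢
    rcases j with _ | j
    · rw [sum_range_succ', corankProp_zero_zero]
      simp [corankProp_zero_succ]
    · rw [hf, ih j (by omega) i (L + 1) (by omega), ih (j - 1) (by omega) i (L + 1) (by omega),
        ih j (by omega) (i + 1) L (by omega), sum_range_succ', sum_range_succ', sum_range_succ',
        corankProp_succ_zero]
      simp only [corankProp_succ_succ h0 h1, add_mul, sum_add_distrib, mul_add, mul_sum, mul_assoc,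
        add_assoc, add_comm 1, mul_left_comm]
      ring

end CorankDistribution

section GeneratingSeries

open PowerSeries

variable {q : ℝ}

/-- A factor of the generating series. -/
noncomputable def invFactor (q : ℝ) (l : ℕ) : ℝ⟦X⟧ := (1 - C (q ^ (2 * l + 3)) * X ^ 2)⁻¹

theorem invFactor_mul (l : ℕ) : (1 - C (q ^ (2 * l + 3)) * X ^ 2) * invFactor q l = 1 :=
  PowerSeries.mul_inv_cancel _ (by simp)

/-- A product of consecutive factors of the generating series. -/
noncomputable def invProd (q : ℝ) (i k : ℕ) : ℝ⟦X⟧ := ∏ l ∈ range k, invFactor q (i + l)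

theorem invProd_succ (i k : ℕ) : invProd q i (k + 1) = invProd q i k * invFactor q (i + k) :=
  prod_range_succ _ _

theorem invProd_succ' (i k : ℕ) :
    invProd q i (k + 1) = invProd q (i + 1) k * invFactor q i := by
  simp only [invProd, prod_range_succ', add_zero, add_assoc, add_comm 1]

theorem sum_scaledGauss (h0 : 0 < q) (h1 : q < 1) (m : ℕ) : ∀ i,
    ∑ k ∈ range (m + 1), C (scaledGauss q m k * q ^ (2 * i * k)) * X ^ (2 * k) * invProd q i k =
      invProd q i m := by
  induction m with
  | zero => intro i; simp [scaledGauss_zero_right, invProd]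
  | succ m ih =>
    intro i
    have hsplit : ∀ k, C (scaledGauss q (m + 1) (k + 1) * q ^ (2 * i * (k + 1))) *
          X ^ (2 * (k + 1)) * invProd q i (k + 1) =
        C (scaledGauss q m (k + 1) * q ^ (2 * i * (k + 1))) * X ^ (2 * (k + 1)) *
          invProd q i (k + 1) +
        C (q ^ (2 * (i + m) + 3)) * X ^ 2 * invFactor q i *
          (C (scaledGauss q m k * q ^ (2 * (i + 1) * k)) * X ^ (2 * k) * invProd q (i + 1) k) := by
      intro k
      rw [scaledGauss_pascal h0 h1, invProd_succ']
      simp only [map_add, map_mul, map_pow]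
      ring
    have hlow := sum_range_succ (fun k => C (scaledGauss q m k * q ^ (2 * i * k)) * X ^ (2 * k) *
      invProd q i k) (m + 1)
    rw [sum_range_succ', ih i, scaledGauss_self_succ] at hlow
    rw [sum_range_succ', sum_congr rfl fun k _ => hsplit k, sum_add_distrib, ← mul_sum, ih (i + 1),
      add_right_comm, scaledGauss_zero_right]
    rw [scaledGauss_zero_right] at hlow
    rw [hlow]
    have e := invProd_succ' (q := q) i m
    have e' := invProd_succ (q := q) i m
    have := invFactor_mul (q := q) (i + m)
    simp only [zero_mul, map_zero, add_zero]
    linear_combination -C (q ^ (2 * (i + m) + 3)) * X ^ 2 * e -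
      (1 - C (q ^ (2 * (i + m) + 3)) * X ^ 2) * e' - invProd q i m * this

/-- `(1 - X) * (1 - q * X)` times the generating series of `Psym n (p ^ (μ + 1))`. -/
noncomputable def numerator (q : ℝ) (n : ℕ) : ℝ⟦X⟧ :=
  (if n % 2 = 0 then C (oddProd q (n / 2)) * (1 - C (q ^ (n + 1)) * X)
    else C (oddProd q (n / 2 + 1))) * invProd q 0 (n / 2)

theorem numerator_even (k : ℕ) : numerator q (2 * k) =
    C (oddProd q k) * (1 - C (q ^ (2 * k + 1)) * X) * invProd q 0 k := by
  simp [numerator]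

theorem numerator_odd (k : ℕ) : numerator q (2 * k + 1) =
    C (oddProd q (k + 1)) * invProd q 0 k := by
  simp [numerator, Nat.add_mod, show (2 * k + 1) / 2 = k by omega]

theorem sum_range_two_mul {M : Type*} [AddCommMonoid M] (f : ℕ → M) (n : ℕ) :
    ∑ r ∈ range (2 * n), f r = ∑ k ∈ range n, (f (2 * k) + f (2 * k + 1)) := by
  induction n with
  | zero => simp
  | succ n ih =>
    rw [show 2 * (n + 1) = 2 * n + 1 + 1 by ring, sum_range_succ, sum_range_succ, ih,
      sum_range_succ, add_assoc]

theorem numerator_eq_sum (h0 : 0 < q) (h1 : q < 1) (n : ℕ) :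
    numerator q n = ∑ r ∈ range (n + 1), C (corankProp q n r) * X ^ r * numerator q r := by
  have hE : ∀ m k, evenCorank q m k * oddProd q k = oddProd q m * scaledGauss q m k := by
    intro m k
    rw [evenCorank, div_mul_cancel₀ _ (oddProd_ne_zero h0 h1 k)]
  rcases Nat.even_or_odd' n with ⟨m, rfl | rfl⟩
  · have hlast : corankProp q (2 * m) (2 * m + 1) = 0 := by simp [corankProp_even_odd]
    have hext := sum_range_succ (fun r => C (corankProp q (2 * m) r) * X ^ r * numerator q r)
      (2 * m + 1)
    rw [hlast, map_zero, zero_mul, zero_mul, add_zero] at hext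
    rw [← hext, show 2 * m + 1 + 1 = 2 * (m + 1) by ring, sum_range_two_mul, numerator_even,
      ← sum_scaledGauss h0 h1, mul_sum]
    refine sum_congr rfl fun k _ => ?_
    have h := one_sub_pow_ne_zero h0 h1 (n := 2 * k + 1) (by omega)
    have hodd : corankProp q (2 * m) (2 * k + 1) * oddProd q (k + 1) =
        (q ^ (2 * k + 1) - q ^ (2 * m + 1)) * (oddProd q m * scaledGauss q m k) := by
      rw [corankProp_even_odd, oddProd_succ, ← hE]
      field_simp
    have hodd' := congrArg (C (R := ℝ)) hodd
    have hE' := congrArg (C (R := ℝ)) (hE m k)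
    rw [numerator_even, numerator_odd, corankProp_even_even]
    simp only [map_mul, map_sub, mul_zero, zero_mul, pow_zero, mul_one] at hodd' hE' ⊢
    linear_combination -X ^ (2 * k) * invProd q 0 k * (1 - C (q ^ (2 * k + 1)) * X) * hE' -
      X ^ (2 * k + 1) * invProd q 0 k * hodd'
  · rw [show 2 * m + 1 + 1 = 2 * (m + 1) by ring, sum_range_two_mul, numerator_odd,
      ← sum_scaledGauss h0 h1, mul_sum]
    refine sum_congr rfl fun k _ => ?_
    have h := one_sub_pow_ne_zero h0 h1 (n := 2 * k + 1) (by omega)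
    have hodd : corankProp q (2 * m + 1) (2 * k + 1) * oddProd q (k + 1) =
        q ^ (2 * k + 1) * (oddProd q (m + 1) * scaledGauss q m k) := by
      rw [corankProp_odd_odd, oddProd_succ, oddProd_succ m, mul_right_comm (oddProd q m), ← hE]
      field_simp
    have heven : corankProp q (2 * m + 1) (2 * k) * oddProd q k =
        oddProd q (m + 1) * scaledGauss q m k := by
      rw [corankProp_odd_even, oddProd_succ m, mul_right_comm (oddProd q m), ← hE]
      ring
    have hodd' := congrArg (C (R := ℝ)) hodd
    have heven' := congrArg (C (R := ℝ)) heven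
    rw [numerator_even, numerator_odd]
    simp only [map_mul, mul_zero, zero_mul, pow_zero, mul_one] at hodd' heven' ⊢
    linear_combination -X ^ (2 * k) * invProd q 0 k * (1 - C (q ^ (2 * k + 1)) * X) * heven' -
      X ^ (2 * k + 1) * invProd q 0 k * hodd'

theorem eq_of_eq_sum_mul {ρ : ℕ → ℕ → ℝ} {V H : ℕ → ℝ⟦X⟧} (h0 : V 0 = H 0)
    (hV : ∀ n, V n = ∑ r ∈ range (n + 1), C (ρ n r) * X ^ r * V r)
    (hH : ∀ n, H n = ∑ r ∈ range (n + 1), C (ρ n r) * X ^ r * H r) (n : ℕ) : V n = H n := by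
  induction n using Nat.strong_induction_on with
  | _ n ih =>
    rcases n with _ | n
    · exact h0
    have e1 := hV (n + 1)
    have e2 := hH (n + 1)
    rw [sum_range_succ] at e1 e2
    rw [sum_congr rfl fun r hr => by rw [ih r (mem_range.1 hr)]] at e1
    have hne : (1 - C (ρ (n + 1) (n + 1)) * X ^ (n + 1) : ℝ⟦X⟧) ≠ 0 := by
      intro h
      simpa using congrArg constantCoeff h
    apply mul_left_cancel₀ hne
    linear_combination e1 - e2

/-- The generating series of the proportions modulo powers of `p`. -/
noncomputable def psymSeries (p n : ℕ) : ℝ⟦X⟧ := PowerSeries.mk fun μ => Psym n (p ^ (μ + 1))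

theorem Psym_one (n : ℕ) : Psym n 1 = 0 := by
  have : Nsym n 1 = 0 := by
    rw [Nsym, Nat.card_eq_zero]
    exact Or.inl ⟨fun A => A.2.2 (Subsingleton.elim _ _)⟩
  simp [Psym, this]

theorem Psym_zero_left {m : ℕ} (hm : 1 < m) : Psym 0 m = 1 := by
  have : Fact (1 < m) := ⟨hm⟩
  have : Nsym 0 m = 1 := by
    rw [Nsym, Nat.card_eq_one_iff_unique]
    refine ⟨⟨fun A B => Subtype.ext (Subsingleton.elim _ _)⟩, ⟨0, ?_, ?_⟩⟩
    · exact Subsingleton.elim _ _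
    · simp
  simp [Psym, this]

theorem psymSeries_eq_sum {p : ℕ} (hp : p.Prime) (hq : q = 1 / p) (h0 : 0 < q) (h1 : q < 1)
    (n : ℕ) :
    psymSeries p n = ∑ r ∈ range (n + 1), C (corankProp q n r) * X ^ r * psymSeries p r := by
  ext μ
  obtain ⟨f, hf0, hf1, hf⟩ := exists_symDensity hp (Nat.le_add_left 1 μ) q hq
  rw [psymSeries, coeff_mk, ← hf0, eq_sum_corankProp h0 h1 hf n 0 (n + 1) (by omega), map_sum]
  refine sum_congr rfl fun r _ => ?_
  rw [zero_add, hf1, mul_assoc, coeff_C_mul, coeff_X_pow_mul']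
  congr 1
  split_ifs with h
  · rw [psymSeries, coeff_mk, Nat.sub_add_comm h]
  · rw [Nat.sub_eq_zero_of_le (by omega), pow_zero, Psym_one]

theorem psymSeries_eq_numerator {p : ℕ} (hp : p.Prime) (hq : q = 1 / p) (h0 : 0 < q) (h1 : q < 1)
    (n : ℕ) : (1 - X) * (1 - C q * X) * psymSeries p n = numerator q n := by
  refine eq_of_eq_sum_mul (ρ := corankProp q)
    (V := fun n => (1 - X) * (1 - C q * X) * psymSeries p n) ?_ (fun n => ?_)
    (numerator_eq_sum h0 h1) n
  · have hone : psymSeries p 0 = PowerSeries.mk 1 := by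
      ext μ
      rw [psymSeries, coeff_mk, coeff_mk,
        Psym_zero_left (Nat.one_lt_pow (by omega) hp.one_lt)]
      rfl
    have hgeom := mk_one_mul_one_sub_eq_one ℝ
    have hnum := numerator_even (q := q) 0
    simp only [mul_zero, zero_add, pow_one, oddProd, invProd, range_zero, prod_empty, map_one,
      mul_one, one_mul] at hnum
    rw [hnum, hone]
    linear_combination (1 - C q * X) * hgeom
  · rw [psymSeries_eq_sum hp hq h0 h1 n, mul_sum]
    exact sum_congr rfl fun r _ => by ring

theorem T_succ (q : ℝ) (k s : ℕ) : T q 1 (k + 1) s = ∑ j ∈ range (s + 1),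
    q ^ j * (PiProd (k + j) (q ^ 2) / (PiProd j (q ^ 2) * PiProd k (q ^ 2))) := by
  rw [T, if_neg (Nat.succ_ne_zero k)]
  refine sum_congr rfl fun j _ => ?_
  rw [show k + 1 + j - 1 = k + j by omega, Nat.add_sub_cancel, one_mul, mul_div_assoc]

theorem PiProd_succ (n : ℕ) (t : ℝ) : PiProd (n + 1) t = PiProd n t * (1 - t ^ (n + 1)) :=
  prod_range_succ _ _

theorem PiProd_zero (t : ℝ) : PiProd 0 t = 1 := prod_range_zero _

theorem PiProd_sq_ne_zero (h0 : 0 < q) (h1 : q < 1) (n : ℕ) : PiProd n (q ^ 2) ≠ 0 :=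
  prod_ne_zero_iff.2 fun j _ => by
    rw [← pow_mul]
    exact one_sub_pow_ne_zero h0 h1 (by omega)

theorem T_zero_right (h0 : 0 < q) (h1 : q < 1) (k : ℕ) : T q 1 k 0 = 1 := by
  rcases k with _ | k
  · simp [T]
  · have := PiProd_sq_ne_zero h0 h1 k
    simp [T_succ, PiProd_zero, this]

theorem T_succ_succ (h0 : 0 < q) (h1 : q < 1) (k s : ℕ) :
    T q 1 (k + 1) (s + 1) = T q 1 k (s + 1) + q ^ (2 * k + 1) * T q 1 (k + 1) s := by
  rcases k with _ | k
  · have hT : ∀ s, T q 1 (0 + 1) s = ∑ j ∈ range (s + 1), q ^ j := fun s => by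
      rw [T_succ]
      refine sum_congr rfl fun j _ => ?_
      rw [zero_add, PiProd_zero, mul_one, div_self (PiProd_sq_ne_zero h0 h1 j), mul_one]
    rw [hT, hT, sum_range_succ', T, if_pos rfl, mul_sum]
    simp only [mul_zero, zero_add, pow_succ', pow_zero]
    ring_nf
  · have hne := PiProd_sq_ne_zero h0 h1
    rw [T_succ, T_succ, T_succ, sum_range_succ', sum_range_succ' _ (s + 1), mul_sum]
    refine (congrArg₂ (· + ·) ?_ ?_).trans (add_right_comm _ _ _)
    · rw [← sum_add_distrib]
      refine sum_congr rfl fun j _ => ?_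
      have h2 : (1 - (q ^ 2) ^ (k + 1)) ≠ 0 := by
        rw [← pow_mul]; exact one_sub_pow_ne_zero h0 h1 (by omega)
      have h3 : (1 - (q ^ 2) ^ (j + 1)) ≠ 0 := by
        rw [← pow_mul]; exact one_sub_pow_ne_zero h0 h1 (by omega)
      have h4 := hne j
      have h5 := hne k
      rw [show k + 1 + (j + 1) = k + j + 1 + 1 by ring, show k + (j + 1) = k + j + 1 by ring,
        show k + 1 + j = k + j + 1 by ring, PiProd_succ (k + j + 1), PiProd_succ j, PiProd_succ k]
      field_simp
      ring
    · simp [PiProd_zero, hne]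

/-- The generating series of `q ^ μ * T q 1 k (μ / 2)`. -/
noncomputable def tSeries (q : ℝ) (k : ℕ) : ℝ⟦X⟧ := PowerSeries.mk fun μ => q ^ μ * T q 1 k (μ / 2)

theorem tSeries_zero : (1 - C q * X) * tSeries q 0 = 1 := by
  ext μ
  rw [sub_mul, one_mul, mul_assoc, map_sub, coeff_C_mul]
  rcases μ with _ | μ
  · simp [tSeries, T]
  · rw [coeff_succ_X_mul]
    simp [tSeries, T, coeff_one, pow_succ']

theorem tSeries_succ (h0 : 0 < q) (h1 : q < 1) (k : ℕ) :
    (1 - C (q ^ (2 * k + 3)) * X ^ 2) * tSeries q (k + 1) = tSeries q k := by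
  ext μ
  rw [sub_mul, one_mul, mul_assoc, map_sub, coeff_C_mul, coeff_X_pow_mul']
  simp only [tSeries, coeff_mk]
  split_ifs with h
  · obtain ⟨ν, rfl⟩ := Nat.exists_eq_add_of_le' h
    rw [Nat.add_sub_cancel, Nat.add_div_right _ (by norm_num), T_succ_succ h0 h1]
    ring
  · rw [Nat.div_eq_of_lt (by omega), T_zero_right h0 h1, T_zero_right h0 h1]
    ring

theorem one_sub_mul_tSeries (h0 : 0 < q) (h1 : q < 1) (k : ℕ) :
    (1 - C q * X) * tSeries q k = invProd q 0 k := by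
  induction k with
  | zero => rw [tSeries_zero]; simp [invProd]
  | succ k ih =>
    rw [invProd_succ, ← ih, zero_add]
    linear_combination -(1 - C q * X) * tSeries q (k + 1) * invFactor_mul (q := q) k +
      (1 - C q * X) * invFactor q k * tSeries_succ h0 h1 k

theorem psymSeries_sub {p : ℕ} (hp : p.Prime) (hq : q = 1 / p) (h0 : 0 < q) (h1 : q < 1) (k : ℕ) :
    psymSeries p (2 * k) - psymSeries p (2 * k + 1) =
      C (q ^ (2 * k + 1) * oddProd q k) * tSeries q k := by
  have e1 := psymSeries_eq_numerator hp hq h0 h1 (2 * k)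
  have e2 := psymSeries_eq_numerator hp hq h0 h1 (2 * k + 1)
  have hne1 : (1 - X : ℝ⟦X⟧) ≠ 0 := fun h => by simpa using congrArg constantCoeff h
  have hne2 : (1 - C q * X : ℝ⟦X⟧) ≠ 0 := fun h => by simpa using congrArg constantCoeff h
  apply mul_left_cancel₀ (mul_ne_zero hne1 hne2)
  have e3 := one_sub_mul_tSeries h0 h1 k
  rw [numerator_even] at e1
  rw [numerator_odd, oddProd_succ] at e2
  simp only [map_mul, map_sub, map_one] at e1 e2 ⊢
  linear_combination e1 - e2 - (1 - X) * C (q ^ (2 * k + 1)) * C (oddProd q k) * e3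

end GeneratingSeries

theorem PiProd_two_mul (q : ℝ) (k : ℕ) :
    PiProd (2 * k) q = oddProd q k * PiProd k (q ^ 2) := by
  induction k with
  | zero => simp [PiProd_zero, oddProd]
  | succ k ih =>
    rw [show 2 * (k + 1) = 2 * k + 1 + 1 by ring, PiProd_succ, PiProd_succ, ih, oddProd_succ,
      PiProd_succ, ← pow_mul]
    ring

theorem Psym_even_explicit (p : ℕ) (hp : p.Prime) (q : ℝ) (hq : q = 1 / p)
    (k μ : ℕ) (hμ : 1 ≤ μ) (s : ℕ) (hs : s = (μ - 1) / 2) :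
    Psym (2 * k) (p ^ μ) =
      Psym (2 * k + 1) (p ^ μ) +
        q ^ (2 * k + μ) * (PiProd (2 * k) q / PiProd k (q ^ 2)) * T q 1 k s := by
  have hp1 : (1 : ℝ) < p := by exact_mod_cast hp.one_lt
  have h0 : 0 < q := by rw [hq]; positivity
  have h1 : q < 1 := by rw [hq, div_lt_one (by positivity)]; exact hp1
  obtain ⟨ν, rfl⟩ := Nat.exists_eq_add_of_le' hμ
  have h := congrArg (PowerSeries.coeff ν) (psymSeries_sub hp hq h0 h1 k)
  rw [map_sub, PowerSeries.coeff_C_mul] at h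
  simp only [psymSeries, tSeries, PowerSeries.coeff_mk] at h
  rw [PiProd_two_mul, mul_div_cancel_right₀ _ (PiProd_sq_ne_zero h0 h1 k), hs, Nat.add_sub_cancel]
  linear_combination h
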